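/- Let n ≥ 1, let W : Fin n → ℝ³ be an eigenvalue matrix with rows W i = (Wᵢ₁, Wᵢ₂, Wᵢ₃), let M = max over all i, j of |Wᵢⱼ| (the Bell number of W), and let p : Fin n → ℝ be nonnegative weights with ∑ᵢ p i = 1. Define E(XY) = ∑ᵢ p i · Wᵢ₁ · Wᵢ₂, E(YZ) = ∑ᵢ p i · Wᵢ₂ · Wᵢ₃, and E(XZ) = ∑ᵢ p i · Wᵢ₁ · Wᵢ₃. Then |E(XY) − E(YZ)| + E(XZ) ≤ M². -/

import Mathlib

/-!
Since `x * y - y * z = y * (x - z)`, for `x, y, z ∈ [-M, M]` the quantity `|x * y - y * z|` is at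
most `M * |x - z|`, and `M * |x - z| + x * z ≤ M ^ 2` because both `(M - x) * (M + z)` and
`(M + x) * (M - z)` are nonnegative. Taking expectations of this pointwise bound gives Bell's
inequality.
-/

open MeasureTheory

section OrderedRing

variable {R : Type*} [CommRing R] [LinearOrder R] [IsOrderedRing R] {x y z M : R}

theorem mul_abs_sub_le_sq_sub_mul (hx : |x| ≤ M) (hz : |z| ≤ M) :
    M * |x - z| ≤ M ^ 2 - x * z := by
  have hM : 0 ≤ M := (abs_nonneg x).trans hx
  obtain ⟨hMx, hxM⟩ := abs_le.1 hx
  obtain ⟨hMz, hzM⟩ := abs_le.1 hz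
  have hxz : 0 ≤ (M - x) * (M + z) :=
    mul_nonneg (sub_nonneg.2 hxM) (neg_le_iff_add_nonneg'.1 hMz)
  have hzx : 0 ≤ (M + x) * (M - z) :=
    mul_nonneg (neg_le_iff_add_nonneg'.1 hMx) (sub_nonneg.2 hzM)
  calc
    M * |x - z| = |M * (x - z)| := by rw [abs_mul, abs_of_nonneg hM]
    _ ≤ M ^ 2 - x * z := abs_le'.2
      ⟨sub_nonneg.1 (hxz.trans_eq (by ring)), sub_nonneg.1 (hzx.trans_eq (by ring))⟩

theorem abs_mul_sub_mul_add_mul_le_sq (hx : |x| ≤ M) (hy : |y| ≤ M) (hz : |z| ≤ M) :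
    |x * y - y * z| + x * z ≤ M ^ 2 :=
  le_sub_iff_add_le.1 <| calc
    |x * y - y * z| = |y| * |x - z| := by rw [← abs_mul, mul_sub, mul_comm x y]
    _ ≤ M * |x - z| := by gcongr
    _ ≤ M ^ 2 - x * z := mul_abs_sub_le_sq_sub_mul hx hz

end OrderedRing

theorem exists_isProbabilityMeasure_forall_integral_eq_sum {ι : Type*} [Fintype ι]
    [MeasurableSpace ι] [MeasurableSingletonClass ι] {p : ι → ℝ} (hp : ∀ i, 0 ≤ p i)
    (hp1 : ∑ i, p i = 1) :
    ∃ μ : Measure ι, IsProbabilityMeasure μ ∧ ∀ f : ι → ℝ, ∫ i, f i ∂μ = ∑ i, p i * f i := by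
  have hsum : ∑ i, ENNReal.ofReal (p i) = 1 := by
    rw [← ENNReal.ofReal_sum_of_nonneg fun i _ => hp i, hp1, ENNReal.ofReal_one]
  refine ⟨(PMF.ofFintype _ hsum).toMeasure, inferInstance, fun f => ?_⟩
  simp [PMF.integral_eq_sum, ENNReal.toReal_ofReal (hp _)]

theorem bell_inequality_prob_general {Ω : Type*} [MeasurableSpace Ω] {μ : Measure Ω}
    [IsProbabilityMeasure μ] {X Y Z : Ω → ℝ} {M : ℝ} (hX : AEStronglyMeasurable X μ)
    (hY : AEStronglyMeasurable Y μ) (hZ : AEStronglyMeasurable Z μ)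
    (hXM : ∀ᵐ ω ∂μ, |X ω| ≤ M) (hYM : ∀ᵐ ω ∂μ, |Y ω| ≤ M) (hZM : ∀ᵐ ω ∂μ, |Z ω| ≤ M) :
    |(∫ ω, X ω * Y ω ∂μ) - ∫ ω, Y ω * Z ω ∂μ| + ∫ ω, X ω * Z ω ∂μ ≤ M ^ 2 := by
  have hY_int : Integrable Y μ := .of_bound hY M hYM
  have hZ_int : Integrable Z μ := .of_bound hZ M hZM
  have hXY : Integrable (fun ω => X ω * Y ω) μ := hY_int.bdd_mul hX hXM
  have hYZ : Integrable (fun ω => Y ω * Z ω) μ := hZ_int.bdd_mul hY hYM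
  have hXZ : Integrable (fun ω => X ω * Z ω) μ := hZ_int.bdd_mul hX hXM
  have hpointwise : ∀ᵐ ω ∂μ, |X ω * Y ω - Y ω * Z ω| + X ω * Z ω ≤ M ^ 2 := by
    filter_upwards [hXM, hYM, hZM] with ω hx hy hz
    exact abs_mul_sub_mul_add_mul_le_sq hx hy hz
  calc |(∫ ω, X ω * Y ω ∂μ) - ∫ ω, Y ω * Z ω ∂μ| + ∫ ω, X ω * Z ω ∂μ
      = |∫ ω, (X ω * Y ω - Y ω * Z ω) ∂μ| + ∫ ω, X ω * Z ω ∂μ := by rw [integral_sub hXY hYZ]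
    _ ≤ (∫ ω, |X ω * Y ω - Y ω * Z ω| ∂μ) + ∫ ω, X ω * Z ω ∂μ := by
        gcongr
        exact abs_integral_le_integral_abs
    _ = ∫ ω, (|X ω * Y ω - Y ω * Z ω| + X ω * Z ω) ∂μ :=
        (integral_add (hXY.sub hYZ).abs hXZ).symm
    _ ≤ ∫ _, M ^ 2 ∂μ :=
        integral_mono_ae ((hXY.sub hYZ).abs.add hXZ) (integrable_const _) hpointwise
    _ = M ^ 2 := by simp

/-- Bell's inequality for a probability distribution `p` on the rows of an
eigenvalue matrix `W ∈ ℝ^{n×3}` with Bell number `M = max_{i,j} |W i j|`. -/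
theorem bell_inequality_prob (n : ℕ) (hn : 1 ≤ n)
    (W : Fin n → Fin 3 → ℝ) (M : ℝ)
    (hM : IsGreatest (Set.range fun q : Fin n × Fin 3 => |W q.1 q.2|) M)
    (p : Fin n → ℝ) (hp : ∀ i, 0 ≤ p i) (hp1 : ∑ i, p i = 1) :
    |(∑ i, p i * (W i 0 * W i 1)) - ∑ i, p i * (W i 1 * W i 2)| +
      ∑ i, p i * (W i 0 * W i 2) ≤ M ^ 2 := by
  obtain ⟨μ, _, hμ⟩ := exists_isProbabilityMeasure_forall_integral_eq_sum hp hp1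
  have hmeas (j : Fin 3) : AEStronglyMeasurable (fun i => W i j) μ := .of_discrete
  have hbound (j : Fin 3) : ∀ᵐ i ∂μ, |W i j| ≤ M := .of_forall fun i => hM.2 ⟨(i, j), rfl⟩
  simpa only [hμ] using bell_inequality_prob_general (hmeas 0) (hmeas 1) (hmeas 2)
    (hbound 0) (hbound 1) (hbound 2)
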